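/- Define on ℝ⁴ (minus no points; everywhere) the vector fields ξ = (2/(√5(2+t²))) e₁ + (2t/(√5(2+t²))) e₂ + (t²/(√5(2+t²))) e₃ − (2/√5) e₄, X₁ = (−t/√(1+t²)) e₁ + (1/√(1+t²)) e₂, X₂ = (−t²/((2+t²)√(1+t²))) e₁ + (−t³/((2+t²)√(1+t²))) e₂ + (2√(1+t²)/(2+t²)) e₃, X₃ = (4/(√5(2+t²))) e₁ + (4t/(√5(2+t²))) e₂ + (2t²/(√5(2+t²))) e₃ + (1/√5) e₄. Then at every point: g̃(ξ, ξ) = 1, g̃(ξ, Xᵢ) = 0 for i = 1, 2, 3, g̃(Xᵢ, Xⱼ) = δᵢⱼ for i, j = 1, 2, 3, and Σᵢ₌₁³ g̃(∇̃_{Xᵢ} Xᵢ, ξ) = 0; that is, {X₁, X₂, X₃} is an orthonormal frame of a minimal hypersurface of (ℝ⁴, g̃) with unit normal ξ. -/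

import Mathlib

noncomputable section

/-- The left-invariant frame fields e₁,e₂,e₃,e₄ on ℝ⁴ (coordinates x,y,z,t = p 0,...,p 3). -/
def eVF (i : Fin 4) (p : Fin 4 → ℝ) : Fin 4 → ℝ :=
  ![![1, 0, 0, 0],
    ![p 3, 1, 0, 0],
    ![(p 3) ^ 2 / 2, p 3, 1, 0],
    ![0, 0, 0, 1]] i

/-- The matrix of the metric g̃ at a point with last coordinate t. -/
def gMat (t : ℝ) : Matrix (Fin 4) (Fin 4) ℝ :=
  !![1, -t, t ^ 2 / 2, 0;
     -t, 1 + t ^ 2, -t * (1 + t ^ 2 / 2), 0;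
     t ^ 2 / 2, -t * (1 + t ^ 2 / 2), 1 + t ^ 2 + t ^ 4 / 4, 0;
     0, 0, 0, 1]

/-- The metric g̃ as a bilinear form on each tangent space. -/
def gMet (p X Y : Fin 4 → ℝ) : ℝ :=
  ∑ i, ∑ j, gMat (p 3) i j * X i * Y j

/-- Partial derivative in direction of the i-th coordinate. -/
def pd (i : Fin 4) (f : (Fin 4 → ℝ) → ℝ) (p : Fin 4 → ℝ) : ℝ :=
  deriv (fun s => f (Function.update p i s)) (p i)

/-- The Christoffel symbols Γᵏᵢⱼ of g̃. -/
def Chr (p : Fin 4 → ℝ) (k i j : Fin 4) : ℝ :=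
  (1 / 2) * ∑ l, (gMat (p 3))⁻¹ k l *
    (pd i (fun q => gMat (q 3) j l) p + pd j (fun q => gMat (q 3) i l) p
      - pd l (fun q => gMat (q 3) i j) p)

/-- The Levi-Civita connection of g̃ in coordinates. -/
def nabla (X Y : (Fin 4 → ℝ) → (Fin 4 → ℝ)) (p : Fin 4 → ℝ) : Fin 4 → ℝ :=
  fun k => (∑ i, X p i * pd i (fun q => Y q k) p)
    + ∑ i, ∑ j, Chr p k i j * X p i * Y p j

/-- Lie bracket of vector fields on ℝ⁴. -/
def bracket (X Y : (Fin 4 → ℝ) → (Fin 4 → ℝ)) (p : Fin 4 → ℝ) : Fin 4 → ℝ :=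
  fderiv ℝ Y p (X p) - fderiv ℝ X p (Y p)

/-- The curvature tensor R̃(X,Y)Z = ∇̃_X ∇̃_Y Z − ∇̃_Y ∇̃_X Z − ∇̃_{[X,Y]} Z. -/
def Riem (X Y Z : (Fin 4 → ℝ) → (Fin 4 → ℝ)) (p : Fin 4 → ℝ) : Fin 4 → ℝ :=
  nabla X (nabla Y Z) p - nabla Y (nabla X Z) p - nabla (bracket X Y) Z p

/-- The unit normal field of the example minimal hypersurface. -/
def ξex (p : Fin 4 → ℝ) : Fin 4 → ℝ :=
  (2 / (Real.sqrt 5 * (2 + (p 3) ^ 2))) • eVF 0 p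
    + (2 * p 3 / (Real.sqrt 5 * (2 + (p 3) ^ 2))) • eVF 1 p
    + ((p 3) ^ 2 / (Real.sqrt 5 * (2 + (p 3) ^ 2))) • eVF 2 p
    - (2 / Real.sqrt 5) • eVF 3 p

/-- The orthonormal tangent frame X₁, X₂, X₃ of the example minimal hypersurface. -/
def Xex : Fin 3 → (Fin 4 → ℝ) → (Fin 4 → ℝ) :=
  ![fun p => (-(p 3) / Real.sqrt (1 + (p 3) ^ 2)) • eVF 0 p
      + (1 / Real.sqrt (1 + (p 3) ^ 2)) • eVF 1 p,
    fun p => (-(p 3) ^ 2 / ((2 + (p 3) ^ 2) * Real.sqrt (1 + (p 3) ^ 2))) • eVF 0 p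
      + (-(p 3) ^ 3 / ((2 + (p 3) ^ 2) * Real.sqrt (1 + (p 3) ^ 2))) • eVF 1 p
      + (2 * Real.sqrt (1 + (p 3) ^ 2) / (2 + (p 3) ^ 2)) • eVF 2 p,
    fun p => (4 / (Real.sqrt 5 * (2 + (p 3) ^ 2))) • eVF 0 p
      + (4 * p 3 / (Real.sqrt 5 * (2 + (p 3) ^ 2))) • eVF 1 p
      + (2 * (p 3) ^ 2 / (Real.sqrt 5 * (2 + (p 3) ^ 2))) • eVF 2 p
      + (1 / Real.sqrt 5) • eVF 3 p]

/-!
The fields `e₁, …, e₄` are the left-invariant frame of the nilpotent group `ℝ³ ⋊ ℝ`, in which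
`t ∈ ℝ` acts by `exp (t • ad e₄)`. In this frame `g̃` is the Euclidean dot product and `∇̃` is given
by Koszul's formula. All fields of the example have components depending on `t` only, so for
`X = ∑ aᵢ(t) eᵢ` and `ξ = ∑ cᵢ(t) eᵢ` one gets `g̃(∇̃_X X, ξ) = a₄ a' ⬝ c + [c, a] ⬝ a`.

The derivative term vanishes: `X₁` and `X₂` have no `e₄`-component, while `ξ = (1/2) X₃ - (√5/2) e₄`
with `X₃` of unit length and with constant `e₄`-component. The three bracket terms are explicit
rational multiples of `2/√5` that add up to zero.
-/

open Matrix

section DotProduct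

variable {m n 𝕜 : Type*} [Fintype n]

theorem sum_sum_mul_mul_eq_dotProduct [Fintype m] [CommSemiring 𝕜] (M : Matrix m n 𝕜) (x : m → 𝕜)
    (y : n → 𝕜) : ∑ i, ∑ j, M i j * x i * y j = x ⬝ᵥ M *ᵥ y := by
  simp only [dotProduct, mulVec, Finset.mul_sum]
  exact Finset.sum_congr rfl fun i _ => Finset.sum_congr rfl fun j _ => by ring

theorem hasDerivAt_dotProduct [NontriviallyNormedField 𝕜] {t : 𝕜} {u v : 𝕜 → n → 𝕜} {u' v' : n → 𝕜}
    (hu : HasDerivAt u u' t) (hv : HasDerivAt v v' t) :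
    HasDerivAt (fun s => u s ⬝ᵥ v s) (u' ⬝ᵥ v t + u t ⬝ᵥ v') t := by
  rw [hasDerivAt_pi] at hu hv
  simp only [dotProduct, ← Finset.sum_add_distrib]
  exact HasDerivAt.fun_sum fun i _ => (hu i).mul (hv i)

theorem hasDerivAt_mulVec [Finite m] [NontriviallyNormedField 𝕜] {t : 𝕜} {M : 𝕜 → Matrix m n 𝕜}
    {M' : Matrix m n 𝕜} {v : 𝕜 → n → 𝕜} {v' : n → 𝕜}
    (hM : ∀ i j, HasDerivAt (fun s => M s i j) (M' i j) t) (hv : HasDerivAt v v' t) :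
    HasDerivAt (fun s => M s *ᵥ v s) (M' *ᵥ v t + M t *ᵥ v') t := by
  have := Fintype.ofFinite m
  exact hasDerivAt_pi.2 fun i => hasDerivAt_dotProduct (hasDerivAt_pi.2 (hM i)) hv

theorem dotProduct_eq_zero_of_hasDerivAt {t : ℝ} {v : ℝ → n → ℝ} {v' : n → ℝ} {c : ℝ}
    (hv : HasDerivAt v v' t) (hc : ∀ s, v s ⬝ᵥ v s = c) : v' ⬝ᵥ v t = 0 := by
  have hderiv := hasDerivAt_dotProduct hv hv
  simp only [hc, dotProduct_comm (v t) v'] at hderiv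
  linarith [hderiv.unique (hasDerivAt_const t c)]

end DotProduct

/-- The matrix of `ad e₄` in the frame `e₁, …, e₄`, that is `[e₄, e₂] = e₁` and `[e₄, e₃] = e₂`. -/
def adLast : Matrix (Fin 4) (Fin 4) ℝ :=
  !![0, 1, 0, 0;
     0, 0, 1, 0;
     0, 0, 0, 0;
     0, 0, 0, 0]

/-- The change of basis `exp (t • adLast)`, whose columns are the fields `e₁, …, e₄` at a point with
last coordinate `t`. -/
def frameMat (t : ℝ) : Matrix (Fin 4) (Fin 4) ℝ :=
  !![1, t, t ^ 2 / 2, 0;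
     0, 1, t, 0;
     0, 0, 1, 0;
     0, 0, 0, 1]

/-- The vector field `∑ i, aᵢ(t) eᵢ`, whose frame components depend on the last coordinate only. -/
def frameField (a : ℝ → Fin 4 → ℝ) (p : Fin 4 → ℝ) : Fin 4 → ℝ :=
  frameMat (p 3) *ᵥ a (p 3)

/-- The Lie bracket of left-invariant fields, on their constant components in the frame
`e₁, …, e₄`. -/
def nilBracket (a b : Fin 4 → ℝ) : Fin 4 → ℝ :=
  a 3 • (adLast *ᵥ b) - b 3 • (adLast *ᵥ a)

theorem frameField_eq_sum (a : ℝ → Fin 4 → ℝ) (p : Fin 4 → ℝ) :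
    frameField a p = ∑ i, a (p 3) i • eVF i p := by
  ext k
  fin_cases k <;> simp [frameField, frameMat, eVF, mulVec, dotProduct, Fin.sum_univ_four] <;> ring

theorem frameField_last (a : ℝ → Fin 4 → ℝ) (p : Fin 4 → ℝ) : frameField a p 3 = a (p 3) 3 := by
  simp [frameField, frameMat, mulVec, dotProduct, Fin.sum_univ_four]

theorem frameMat_zero : frameMat 0 = 1 := by
  ext i j
  fin_cases i <;> fin_cases j <;> simp [frameMat]

theorem frameMat_add (s t : ℝ) : frameMat (s + t) = frameMat s * frameMat t := by
  ext i j
  fin_cases i <;> fin_cases j <;> simp [frameMat, Matrix.mul_apply, Fin.sum_univ_four] <;> ring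

theorem frameMat_neg_mul_self (t : ℝ) : frameMat (-t) * frameMat t = 1 := by
  rw [← frameMat_add, neg_add_cancel, frameMat_zero]

theorem adLast_mul_frameMat (t : ℝ) : adLast * frameMat t = frameMat t * adLast := by
  ext i j
  fin_cases i <;> fin_cases j <;> simp [adLast, frameMat, Matrix.mul_apply, Fin.sum_univ_four]

theorem adLast_mulVec_frameField (a : ℝ → Fin 4 → ℝ) (p : Fin 4 → ℝ) :
    adLast *ᵥ frameField a p = frameField (fun t => adLast *ᵥ a t) p := by
  simp only [frameField, mulVec_mulVec, adLast_mul_frameMat]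

theorem hasDerivAt_frameMat (t : ℝ) (i j : Fin 4) :
    HasDerivAt (fun s => frameMat s i j) ((frameMat t * adLast) i j) t := by
  have hsq : HasDerivAt (fun s : ℝ => s ^ 2 / 2) t t :=
    ((hasDerivAt_pow 2 t).div_const 2).congr_deriv (by simp)
  fin_cases i <;> fin_cases j <;>
    simp [frameMat, adLast, Matrix.mul_apply, Fin.sum_univ_four, hasDerivAt_const,
      hasDerivAt_id', hsq]

theorem hasDerivAt_frameMat_mulVec {b : ℝ → Fin 4 → ℝ} {b' : Fin 4 → ℝ} {t : ℝ}
    (hb : HasDerivAt b b' t) :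
    HasDerivAt (fun s => frameMat s *ᵥ b s) (frameMat t *ᵥ (b' + adLast *ᵥ b t)) t :=
  (hasDerivAt_mulVec (hasDerivAt_frameMat t) hb).congr_deriv <| by
    rw [mulVec_add, mulVec_mulVec, add_comm]

theorem gMat_eq_transpose_mul_self (t : ℝ) : gMat t = (frameMat (-t))ᵀ * frameMat (-t) := by
  ext i j
  fin_cases i <;> fin_cases j <;>
    simp [frameMat, gMat, Matrix.mul_apply, Fin.sum_univ_four] <;> ring

theorem gMat_transpose (t : ℝ) : (gMat t)ᵀ = gMat t := by
  rw [gMat_eq_transpose_mul_self, transpose_mul, transpose_transpose]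

theorem gMat_mul_frameMat (t : ℝ) : gMat t * frameMat t = (frameMat (-t))ᵀ := by
  rw [gMat_eq_transpose_mul_self, Matrix.mul_assoc, frameMat_neg_mul_self, Matrix.mul_one]

theorem isUnit_det_gMat (t : ℝ) : IsUnit (gMat t).det := by
  refine isUnit_det_of_right_inverse (B := frameMat t * (frameMat t)ᵀ) ?_
  rw [← Matrix.mul_assoc, gMat_mul_frameMat, ← transpose_mul,
    mul_eq_one_comm.1 (frameMat_neg_mul_self t), transpose_one]

theorem hasDerivAt_gMat (t : ℝ) (i j : Fin 4) :
    HasDerivAt (fun s => gMat s i j) (-(adLastᵀ * gMat t + gMat t * adLast) i j) t := by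
  have hcol (l : Fin 4) : HasDerivAt (fun s => (frameMat (-s))ᵀ l)
      (-(frameMat (-t) * adLast)ᵀ l) t :=
    hasDerivAt_pi.2 fun k =>
      ((hasDerivAt_frameMat (-t) k l).scomp t (hasDerivAt_neg t)).congr_deriv
        (by simp [-transpose_mul])
  simp only [gMat_eq_transpose_mul_self]
  refine (hasDerivAt_dotProduct (hcol i) (hcol j)).congr_deriv ?_
  rw [← Matrix.mul_assoc, ← transpose_mul, Matrix.mul_assoc, neg_dotProduct, dotProduct_neg,
    ← neg_add]
  rfl

theorem gMet_eq_dotProduct (p X Y : Fin 4 → ℝ) : gMet p X Y = X ⬝ᵥ gMat (p 3) *ᵥ Y :=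
  sum_sum_mul_mul_eq_dotProduct _ X Y

theorem gMet_comm (p X Y : Fin 4 → ℝ) : gMet p X Y = gMet p Y X := by
  rw [gMet_eq_dotProduct, gMet_eq_dotProduct, ← dotProduct_transpose_mulVec, gMat_transpose]

theorem gMet_frameField (a b : ℝ → Fin 4 → ℝ) (p : Fin 4 → ℝ) :
    gMet p (frameField a p) (frameField b p) = a (p 3) ⬝ᵥ b (p 3) := by
  rw [gMet_eq_dotProduct, frameField, frameField, mulVec_mulVec, gMat_mul_frameMat,
    dotProduct_transpose_mulVec, mulVec_mulVec, frameMat_neg_mul_self, one_mulVec, dotProduct_comm]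

theorem pd_comp_apply (i l : Fin 4) (F : ℝ → ℝ) (p : Fin 4 → ℝ) :
    pd i (fun q => F (q l)) p = if i = l then deriv F (p l) else 0 := by
  unfold pd
  split_ifs with h
  · subst h
    simp
  · simp [Function.update_of_ne (Ne.symm h)]

theorem gMat_mulVec_Chr (p : Fin 4 → ℝ) (i j : Fin 4) :
    gMat (p 3) *ᵥ (fun k => Chr p k i j) = fun l =>
      (1 / 2) * (pd i (fun q => gMat (q 3) j l) p + pd j (fun q => gMat (q 3) i l) p
        - pd l (fun q => gMat (q 3) i j) p) := by
  set D : Fin 4 → ℝ := fun l => pd i (fun q => gMat (q 3) j l) p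
    + pd j (fun q => gMat (q 3) i l) p - pd l (fun q => gMat (q 3) i j) p
  change gMat (p 3) *ᵥ ((1 / 2 : ℝ) • ((gMat (p 3))⁻¹ *ᵥ D)) = (1 / 2 : ℝ) • D
  rw [mulVec_smul, mulVec_mulVec, mul_nonsing_inv _ (isUnit_det_gMat _), one_mulVec]

theorem gMet_adLast_mulVec_add (p X Y : Fin 4 → ℝ) :
    gMet p (adLast *ᵥ X) Y + gMet p X (adLast *ᵥ Y) =
      -∑ i, ∑ j, deriv (fun s => gMat s i j) (p 3) * X i * Y j := by
  simp only [(hasDerivAt_gMat (p 3) _ _).deriv]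
  rw [gMet_eq_dotProduct, gMet_eq_dotProduct, dotProduct_comm (adLast *ᵥ X),
    ← dotProduct_transpose_mulVec, mulVec_mulVec, mulVec_mulVec, ← dotProduct_add, ← add_mulVec,
    ← neg_eq_iff_eq_neg, ← dotProduct_neg, ← neg_mulVec]
  exact (sum_sum_mul_mul_eq_dotProduct
    (-(adLastᵀ * gMat (p 3) + gMat (p 3) * adLast)) X Y).symm

theorem gMet_sum_Chr (p X Y Z : Fin 4 → ℝ) :
    gMet p Z (fun k => ∑ i, ∑ j, Chr p k i j * X i * Y j) =
      (1 / 2) * (Z 3 * (gMet p (adLast *ᵥ X) Y + gMet p X (adLast *ᵥ Y))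
        - X 3 * (gMet p (adLast *ᵥ Y) Z + gMet p Y (adLast *ᵥ Z))
        - Y 3 * (gMet p (adLast *ᵥ X) Z + gMet p X (adLast *ᵥ Z))) := by
  have hsum : (fun k => ∑ i, ∑ j, Chr p k i j * X i * Y j) =
      ∑ i, ∑ j, (X i * Y j) • (fun k => Chr p k i j) := by
    ext k
    simp only [Finset.sum_apply, Pi.smul_apply, smul_eq_mul]
    exact Finset.sum_congr rfl fun i _ => Finset.sum_congr rfl fun j _ => by ring
  rw [gMet_eq_dotProduct, hsum]
  simp only [mulVec_sum, mulVec_smul, gMat_mulVec_Chr, gMet_adLast_mulVec_add,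
    fun i j l => pd_comp_apply i 3 (fun s => gMat s j l) p]
  simp only [dotProduct, Finset.sum_apply, Pi.smul_apply, smul_eq_mul]
  simp only [Fin.sum_univ_four, Fin.reduceEq, if_true, if_false]
  ring

/-- Koszul's formula, with a term for the variation of the components of the second field: they
depend on the last coordinate alone, so that only `e₄` differentiates them. -/
theorem gMet_nabla_frameField {a b : ℝ → Fin 4 → ℝ} (c : ℝ → Fin 4 → ℝ) {b' : Fin 4 → ℝ}
    {p : Fin 4 → ℝ} (hb : HasDerivAt b b' (p 3)) :
    gMet p (nabla (frameField a) (frameField b) p) (frameField c p) =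
      a (p 3) 3 * (b' ⬝ᵥ c (p 3)) + (1 / 2) * (nilBracket (a (p 3)) (b (p 3)) ⬝ᵥ c (p 3)
        - nilBracket (b (p 3)) (c (p 3)) ⬝ᵥ a (p 3)
        + nilBracket (c (p 3)) (a (p 3)) ⬝ᵥ b (p 3)) := by
  have hpd (k : Fin 4) : ∑ i, frameField a p i * pd i (fun q => frameField b q k) p =
      a (p 3) 3 * frameField (fun t => b' + adLast *ᵥ b t) p k := by
    have hderiv := (hasDerivAt_pi.1 (hasDerivAt_frameMat_mulVec hb) k).deriv
    simp only [fun i => pd_comp_apply i 3 (fun s => (frameMat s *ᵥ b s) k) p, frameField, hderiv,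
      mul_ite, mul_zero, Finset.sum_ite_eq', Finset.mem_univ, if_true]
    rw [← frameField_last a]
    rfl
  have hnabla : nabla (frameField a) (frameField b) p =
      a (p 3) 3 • frameField (fun t => b' + adLast *ᵥ b t) p +
        fun k => ∑ i, ∑ j, Chr p k i j * frameField a p i * frameField b p j := by
    ext k
    simp [nabla, hpd]
  rw [gMet_comm, hnabla, gMet_eq_dotProduct, mulVec_add, mulVec_smul, dotProduct_add,
    dotProduct_smul, ← gMet_eq_dotProduct, ← gMet_eq_dotProduct, gMet_sum_Chr]
  simp only [frameField_last, adLast_mulVec_frameField, gMet_frameField, nilBracket,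
    sub_dotProduct, smul_dotProduct, smul_eq_mul, add_dotProduct, dotProduct_comm (c (p 3))]
  rw [dotProduct_comm (b (p 3)) (adLast *ᵥ c (p 3)), dotProduct_comm (a (p 3)) (adLast *ᵥ c (p 3)),
    dotProduct_comm (a (p 3)) (adLast *ᵥ b (p 3))]
  ring

theorem gMet_nabla_self_frameField {a : ℝ → Fin 4 → ℝ} (c : ℝ → Fin 4 → ℝ) {a' : Fin 4 → ℝ}
    {p : Fin 4 → ℝ} (ha : HasDerivAt a a' (p 3)) :
    gMet p (nabla (frameField a) (frameField a) p) (frameField c p) =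
      a (p 3) 3 * (a' ⬝ᵥ c (p 3)) + nilBracket (c (p 3)) (a (p 3)) ⬝ᵥ a (p 3) := by
  rw [gMet_nabla_frameField c ha]
  simp only [nilBracket, sub_dotProduct, smul_dotProduct, smul_eq_mul]
  ring

theorem nilBracket_dotProduct_right (a c : Fin 4 → ℝ) :
    nilBracket c a ⬝ᵥ a = c 3 * (a 1 * (a 0 + a 2)) - a 3 * (c 1 * a 0 + c 2 * a 1) := by
  simp only [nilBracket, adLast, mulVec, dotProduct, Fin.sum_univ_four, of_apply, cons_val,
    Pi.sub_apply, Pi.smul_apply, smul_eq_mul]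
  ring

/-- The components of the unit normal `ξex` in the frame `e₁, …, e₄`, as functions of the last
coordinate. -/
def normalCoeff (t : ℝ) : Fin 4 → ℝ :=
  ![2 / (√5 * (2 + t ^ 2)), 2 * t / (√5 * (2 + t ^ 2)), t ^ 2 / (√5 * (2 + t ^ 2)), -(2 / √5)]

/-- The components of the tangent fields `Xex` in the frame `e₁, …, e₄`, as functions of the last
coordinate. -/
def tangentCoeff : Fin 3 → ℝ → Fin 4 → ℝ :=
  ![fun t => ![-t / √(1 + t ^ 2), 1 / √(1 + t ^ 2), 0, 0],
    fun t => ![-t ^ 2 / ((2 + t ^ 2) * √(1 + t ^ 2)), -t ^ 3 / ((2 + t ^ 2) * √(1 + t ^ 2)),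
      2 * √(1 + t ^ 2) / (2 + t ^ 2), 0],
    fun t => ![4 / (√5 * (2 + t ^ 2)), 4 * t / (√5 * (2 + t ^ 2)), 2 * t ^ 2 / (√5 * (2 + t ^ 2)),
      1 / √5]]

theorem ξex_eq_frameField : ξex = frameField normalCoeff := by
  ext1 p
  simp [frameField_eq_sum, Fin.sum_univ_four, ξex, normalCoeff, sub_eq_add_neg]

theorem Xex_eq_frameField (i : Fin 3) : Xex i = frameField (tangentCoeff i) := by
  ext1 p
  fin_cases i <;> simp [frameField_eq_sum, Fin.sum_univ_four, Xex, tangentCoeff]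

theorem sq_sqrt_five : √(5 : ℝ) ^ 2 = 5 :=
  Real.sq_sqrt (by norm_num)

theorem sq_sqrt_one_add_sq (t : ℝ) : √(1 + t ^ 2) ^ 2 = 1 + t ^ 2 :=
  Real.sq_sqrt (by positivity)

theorem tangentCoeff_dotProduct_self (i : Fin 3) (t : ℝ) :
    tangentCoeff i t ⬝ᵥ tangentCoeff i t = 1 := by
  match i with
  | 0 =>
    simp only [tangentCoeff, cons_val, dotProduct, Fin.sum_univ_four]
    field_simp
    linear_combination -sq_sqrt_one_add_sq t
  | 1 =>
    simp only [tangentCoeff, cons_val, dotProduct, Fin.sum_univ_four]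
    field_simp
    linear_combination
      (4 * (√(1 + t ^ 2) ^ 2 + 1 + t ^ 2) - (2 + t ^ 2) ^ 2) * sq_sqrt_one_add_sq t
  | 2 =>
    simp only [tangentCoeff, cons_val, dotProduct, Fin.sum_univ_four]
    field_simp
    linear_combination -(2 + t ^ 2) ^ 2 * sq_sqrt_five

theorem tangentCoeff_dotProduct_of_lt {i j : Fin 3} (hij : i < j) (t : ℝ) :
    tangentCoeff i t ⬝ᵥ tangentCoeff j t = 0 := by
  obtain ⟨rfl, rfl⟩ | ⟨rfl, rfl⟩ | ⟨rfl, rfl⟩ :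
      i = 0 ∧ j = 1 ∨ i = 0 ∧ j = 2 ∨ i = 1 ∧ j = 2 := by decide +revert
  all_goals
    simp only [tangentCoeff, cons_val, dotProduct, Fin.sum_univ_four]
    field_simp
  · ring
  · ring
  · rw [sq_sqrt_one_add_sq]
    ring

theorem tangentCoeff_dotProduct (i j : Fin 3) (t : ℝ) :
    tangentCoeff i t ⬝ᵥ tangentCoeff j t = if i = j then 1 else 0 := by
  rcases lt_trichotomy i j with hij | rfl | hij
  · rw [tangentCoeff_dotProduct_of_lt hij, if_neg hij.ne]
  · rw [tangentCoeff_dotProduct_self, if_pos rfl]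
  · rw [dotProduct_comm, tangentCoeff_dotProduct_of_lt hij, if_neg hij.ne']

theorem normalCoeff_eq_sub (t : ℝ) :
    normalCoeff t = (1 / 2 : ℝ) • tangentCoeff 2 t - (√5 / 2) • Pi.single 3 1 := by
  ext k
  fin_cases k <;> simp [normalCoeff, tangentCoeff] <;> field_simp <;> linarith [sq_sqrt_five]

theorem dotProduct_normalCoeff (v : Fin 4 → ℝ) (t : ℝ) :
    v ⬝ᵥ normalCoeff t = (1 / 2) * (v ⬝ᵥ tangentCoeff 2 t) - √5 / 2 * v 3 := by
  simp [normalCoeff_eq_sub, dotProduct_sub, dotProduct_smul]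

theorem tangentCoeff_dotProduct_normalCoeff (i : Fin 3) (t : ℝ) :
    tangentCoeff i t ⬝ᵥ normalCoeff t = 0 := by
  rw [dotProduct_normalCoeff, tangentCoeff_dotProduct]
  fin_cases i <;> simp [tangentCoeff]
  field_simp
  norm_num

theorem normalCoeff_dotProduct_self (t : ℝ) : normalCoeff t ⬝ᵥ normalCoeff t = 1 := by
  rw [dotProduct_normalCoeff, dotProduct_comm, tangentCoeff_dotProduct_normalCoeff]
  simp [normalCoeff]

theorem differentiable_tangentCoeff (i : Fin 3) : Differentiable ℝ (tangentCoeff i) := by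
  refine fun t => differentiableAt_pi.2 fun k => ?_
  fin_cases i <;> fin_cases k <;>
    simp only [tangentCoeff, Fin.zero_eta, Fin.mk_one, Fin.reduceFinMk, cons_val] <;>
    fun_prop (disch := positivity)

theorem tangentCoeff_last_mul_deriv_dotProduct_normalCoeff (i : Fin 3) (t : ℝ) :
    tangentCoeff i t 3 * (deriv (tangentCoeff i) t ⬝ᵥ normalCoeff t) = 0 := by
  match i with
  | 0 | 1 => simp [tangentCoeff]
  | 2 =>
    have hderiv := (differentiable_tangentCoeff 2 t).hasDerivAt
    have hself : deriv (tangentCoeff 2) t ⬝ᵥ tangentCoeff 2 t = 0 :=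
      dotProduct_eq_zero_of_hasDerivAt hderiv (tangentCoeff_dotProduct_self 2)
    have hlast : deriv (tangentCoeff 2) t 3 = 0 :=
      (hasDerivAt_pi.1 hderiv 3).unique (hasDerivAt_const t (1 / √5))
    rw [dotProduct_normalCoeff, hself, hlast]
    ring

theorem gMet_nabla_Xex_ξex (i : Fin 3) (p : Fin 4 → ℝ) :
    gMet p (nabla (Xex i) (Xex i) p) (ξex p) =
      nilBracket (normalCoeff (p 3)) (tangentCoeff i (p 3)) ⬝ᵥ tangentCoeff i (p 3) := by
  rw [ξex_eq_frameField, Xex_eq_frameField,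
    gMet_nabla_self_frameField _ (differentiable_tangentCoeff i (p 3)).hasDerivAt,
    tangentCoeff_last_mul_deriv_dotProduct_normalCoeff, zero_add]

theorem nilBracket_normalCoeff_dotProduct_tangentCoeff_zero (t : ℝ) :
    nilBracket (normalCoeff t) (tangentCoeff 0 t) ⬝ᵥ tangentCoeff 0 t =
      2 / √5 * (t / (1 + t ^ 2)) := by
  rw [nilBracket_dotProduct_right, ← sq_sqrt_one_add_sq t]
  simp only [normalCoeff, tangentCoeff, cons_val]
  field_simp
  ring

theorem nilBracket_normalCoeff_dotProduct_tangentCoeff_one (t : ℝ) :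
    nilBracket (normalCoeff t) (tangentCoeff 1 t) ⬝ᵥ tangentCoeff 1 t =
      2 / √5 * (t ^ 3 / ((1 + t ^ 2) * (2 + t ^ 2))) := by
  rw [nilBracket_dotProduct_right]
  simp only [normalCoeff, tangentCoeff, cons_val]
  field_simp
  simp only [sq_sqrt_one_add_sq]
  ring

theorem nilBracket_normalCoeff_dotProduct_tangentCoeff_two (t : ℝ) :
    nilBracket (normalCoeff t) (tangentCoeff 2 t) ⬝ᵥ tangentCoeff 2 t =
      -(2 / √5 * (2 * t / (2 + t ^ 2))) := by
  rw [nilBracket_dotProduct_right]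
  simp only [normalCoeff, tangentCoeff, cons_val]
  field_simp
  simp only [sq_sqrt_five]
  ring

/-- ξ is a unit field, {X₁,X₂,X₃} is orthonormal and orthogonal to ξ, and
Σᵢ g̃(∇̃_{Xᵢ}Xᵢ, ξ) = 0: the example hypersurface is minimal. -/
theorem nil4_minimal_example : ∀ p : Fin 4 → ℝ,
    gMet p (ξex p) (ξex p) = 1 ∧
    (∀ i : Fin 3, gMet p (ξex p) (Xex i p) = 0) ∧
    (∀ i j : Fin 3, gMet p (Xex i p) (Xex j p) = if i = j then 1 else 0) ∧
    (∑ i, gMet p (nabla (Xex i) (Xex i) p) (ξex p)) = 0 := by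
  intro p
  refine ⟨?_, fun i => ?_, fun i j => ?_, ?_⟩
  · rw [ξex_eq_frameField, gMet_frameField, normalCoeff_dotProduct_self]
  · rw [ξex_eq_frameField, Xex_eq_frameField, gMet_frameField, dotProduct_comm,
      tangentCoeff_dotProduct_normalCoeff]
  · rw [Xex_eq_frameField, Xex_eq_frameField, gMet_frameField, tangentCoeff_dotProduct]
  · simp only [Fin.sum_univ_three, gMet_nabla_Xex_ξex,
      nilBracket_normalCoeff_dotProduct_tangentCoeff_zero,
      nilBracket_normalCoeff_dotProduct_tangentCoeff_one,
      nilBracket_normalCoeff_dotProduct_tangentCoeff_two]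
    field_simp
    ring
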